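/- arXiv:0802.0663 — 3 statements merged into one kernel-verified Lean document; each statement's English description precedes it below -/
import Mathlib

section
/- Let k be a natural number and let a, b : ℝ × ℝ → Matrix k k ℝ be smooth with a (s, 0) = 0 and a (s, 1) = 0 for all s ∈ [0,1], and additionally b (0, t) = 0 for all t ∈ [0,1] (the source path is constant, so the target path t ↦ (1,t) is traversed by a contractible loop with contracting homotopy the square). Define the curvature K (s,t) = ∂_s b (s,t) − ∂_t a (s,t) + [a (s,t), b (s,t)]. Let τ : ℝ × ℝ → Matrix k k ℝ be smooth such that for all (s,t) ∈ [0,1] × [0,1]: τ (s, 0) = 1, τ (s,t) is invertible, and ∂_t τ (s,t) = − b (s,t) * τ (s,t). Let g : ℝ → Matrix k k ℝ be differentiable with g 0 = 1 and g' (s) = − g (s) * ∫₀¹ (τ (s,t))⁻¹ * K (s,t) * τ (s,t) dt for all s ∈ [0,1]. Then g 1 = τ (1,1): the holonomy of the connection around the contractible loop equals the path-ordered exponential of the transport-conjugated curvature integrated over a filling disk. -/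
/-!
Write `σ = ∂_s τ`. Since `∂_s` and `∂_t` commute on `τ`, the transport equation `∂_t τ = -b τ`
gives `∂_t σ = -(∂_s b) τ - b σ`, and therefore

  `∂_t (τ⁻¹ (σ + a τ)) = -τ⁻¹ K τ`.

Integrating over `t ∈ [0, 1]`, where `σ (s, 0) = 0` and `a` vanishes at both ends, yields
`(τ⁻¹ σ) (s, 1) = -∫ τ⁻¹ K τ dt`. So `h s = τ (s, 1)` solves the same linear equation
`h' = -h M` as `g`, and `(g h⁻¹)' = 0`. As `b (0, t) = 0` forces `τ (0, 1) = 1`, both start at `1`,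
hence `g 1 = h 1`.

The entrywise sup norm on matrices is not submultiplicative, so the product and inverse rules for
derivatives are proved directly here instead of being taken from the theory of normed algebras.
-/

attribute [local instance] Matrix.normedAddCommGroup Matrix.normedSpace

section Calculus

variable {k : ℕ}

lemma hasDerivAt_matrix_mul {A B : ℝ → Matrix (Fin k) (Fin k) ℝ}
    {A' B' : Matrix (Fin k) (Fin k) ℝ} {x : ℝ}
    (hA : HasDerivAt A A' x) (hB : HasDerivAt B B' x) :
    HasDerivAt (fun t => A t * B t) (A' * B x + A x * B') x := by
  have hA' : ∀ i j, HasDerivAt (fun t => A t i j) (A' i j) x := fun i j =>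
    hasDerivAt_pi.1 (hasDerivAt_pi.1 hA i) j
  have hB' : ∀ i j, HasDerivAt (fun t => B t i j) (B' i j) x := fun i j =>
    hasDerivAt_pi.1 (hasDerivAt_pi.1 hB i) j
  refine hasDerivAt_pi.2 fun i => hasDerivAt_pi.2 fun j => ?_
  simp only [Matrix.add_apply, Matrix.mul_apply, ← Finset.sum_add_distrib]
  exact HasDerivAt.fun_sum fun l _ => (hA' i l).mul (hB' l j)

lemma continuousAt_nonsing_inv {X : Type*} [TopologicalSpace X]
    {A : X → Matrix (Fin k) (Fin k) ℝ} {x : X}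
    (hA : ContinuousAt A x) (hu : IsUnit (A x)) :
    ContinuousAt (fun t => (A t)⁻¹) x := by
  have hdet : ContinuousAt (fun t => (A t).det) x :=
    (continuous_id.matrix_det).continuousAt.comp hA
  have hadj : ContinuousAt (fun t => (A t).adjugate) x :=
    (continuous_id.matrix_adjugate).continuousAt.comp hA
  have hne : (A x).det ≠ 0 := ((Matrix.isUnit_iff_isUnit_det _).1 hu).ne_zero
  simp only [Matrix.inv_def, Ring.inverse_eq_inv']
  exact (hdet.inv₀ hne).smul hadj

/-- Invertibility at the single point `x` suffices, being an open condition. The rule comes from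
`A(t)⁻¹ - A(x)⁻¹ = -A(t)⁻¹ (A(t) - A(x)) A(x)⁻¹` and continuity of the inverse. -/
lemma hasDerivAt_matrix_inv {A : ℝ → Matrix (Fin k) (Fin k) ℝ}
    {A' : Matrix (Fin k) (Fin k) ℝ} {x : ℝ}
    (hA : HasDerivAt A A' x) (hu : IsUnit (A x)) :
    HasDerivAt (fun t => (A t)⁻¹) (-((A x)⁻¹ * A' * (A x)⁻¹)) x := by
  have hinv := continuousAt_nonsing_inv hA.continuousAt hu
  have hux := (Matrix.isUnit_iff_isUnit_det _).1 hu
  have hne : (A x).det ≠ 0 := hux.ne_zero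
  have hdet : ContinuousAt (fun t => (A t).det) x :=
    (continuous_id.matrix_det).continuousAt.comp hA.continuousAt
  have hev : ∀ᶠ t in nhdsWithin x {x}ᶜ, (A t).det ≠ 0 :=
    (hdet.eventually_ne hne).filter_mono nhdsWithin_le_nhds
  have hslope : Filter.Tendsto (slope A x) (nhdsWithin x {x}ᶜ) (nhds A') :=
    hasDerivAt_iff_tendsto_slope.1 hA
  suffices hgoal : Filter.Tendsto (slope (fun t => (A t)⁻¹) x) (nhdsWithin x {x}ᶜ)
      (nhds (-((A x)⁻¹ * A' * (A x)⁻¹))) from hasDerivAt_iff_tendsto_slope.2 hgoal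
  have hlim := (((hinv.tendsto.mono_left nhdsWithin_le_nhds).mul hslope).mul
    (tendsto_const_nhds (x := (A x)⁻¹))).neg
  refine hlim.congr' ?_
  filter_upwards [hev] with t ht
  have hut : IsUnit (A t).det := isUnit_iff_ne_zero.2 ht
  simp only [slope_def_module, Matrix.mul_smul, Matrix.smul_mul]
  rw [← smul_neg]
  congr 1
  rw [Matrix.mul_sub, Matrix.sub_mul, Matrix.nonsing_inv_mul _ hut, Matrix.mul_assoc,
    Matrix.mul_nonsing_inv _ hux, Matrix.one_mul, Matrix.mul_one, neg_sub]

/-- The algebra behind `∂_t (τ⁻¹ (∂_s τ + a τ)) = -τ⁻¹ K τ`, with `J`, `T`, `S`, `A`, `B`, `At`, `Bs`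
standing for `τ⁻¹`, `τ`, `∂_s τ`, `a`, `b`, `∂_t a`, `∂_s b`. -/
lemma stokes_ring_identity {R : Type*} [Ring R] (J T S A B At Bs : R) :
    -(- -(J * B) * (S + A * T) + J * (-Bs * T + -B * S + (At * T + A * (-B * T)))) =
      J * (Bs - At + (A * B - B * A)) * T := by
  noncomm_ring

end Calculus

section Partial

variable {E : Type*} [NormedAddCommGroup E] [NormedSpace ℝ E]

lemma hasDerivAt_partial_fst {f : ℝ × ℝ → E} {s t : ℝ} (hf : DifferentiableAt ℝ f (s, t)) :
    HasDerivAt (fun r => f (r, t)) (fderiv ℝ f (s, t) (1, 0)) s :=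
  hf.hasFDerivAt.comp_hasDerivAt (f := fun r : ℝ => (r, t)) s
    ((hasDerivAt_id s).prodMk (hasDerivAt_const s t))

lemma hasDerivAt_partial_snd {f : ℝ × ℝ → E} {s t : ℝ} (hf : DifferentiableAt ℝ f (s, t)) :
    HasDerivAt (fun r => f (s, r)) (fderiv ℝ f (s, t) (0, 1)) t :=
  hf.hasFDerivAt.comp_hasDerivAt (f := fun r : ℝ => (s, r)) t
    ((hasDerivAt_const t s).prodMk (hasDerivAt_id t))

/-- Two functions that agree on `[0, 1]` have equal derivatives there, also at the endpoints. -/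
lemma deriv_eq_of_eqOn_Icc {u v : ℝ → E} {u' v' : E} {s : ℝ} (hs : s ∈ Set.Icc (0 : ℝ) 1)
    (huv : ∀ r ∈ Set.Icc (0 : ℝ) 1, u r = v r)
    (hu : HasDerivAt u u' s) (hv : HasDerivAt v v' s) : u' = v' :=
  (uniqueDiffOn_Icc zero_lt_one s hs).eq_deriv _ hu.hasDerivWithinAt
    (hv.hasDerivWithinAt.congr huv (huv s hs))

lemma eq_of_hasDerivAt_zero_Icc {u : ℝ → E}
    (hu : ∀ r ∈ Set.Icc (0 : ℝ) 1, HasDerivAt u 0 r) : u 1 = u 0 :=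
  constant_of_has_deriv_right_zero
    (fun r hr => (hu r hr).continuousAt.continuousWithinAt)
    (fun r hr => (hu r (Set.Ico_subset_Icc_self hr)).hasDerivWithinAt) 1
    (Set.right_mem_Icc.2 zero_le_one)

lemma hasDerivAt_partial_snd_fst {f : ℝ × ℝ → E} (hf : ContDiff ℝ (⊤ : ℕ∞) f) (s t : ℝ) :
    HasDerivAt (fun r => fderiv ℝ f (s, r) (1, 0)) (fderiv ℝ (fderiv ℝ f) (s, t) (0, 1) (1, 0)) t := by
  have hd : Differentiable ℝ (fderiv ℝ f) :=
    (hf.fderiv_right (m := 1) (by norm_cast)).differentiable (by norm_num)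
  simpa using (hasDerivAt_partial_snd (hd (s, t))).clm_apply (hasDerivAt_const t ((1 : ℝ), (0 : ℝ)))

/-- The value is `∂_t ∂_s f`: symmetry of the second derivative is built in. -/
lemma hasDerivAt_partial_fst_snd {f : ℝ × ℝ → E} (hf : ContDiff ℝ (⊤ : ℕ∞) f) (s t : ℝ) :
    HasDerivAt (fun r => fderiv ℝ f (r, t) (0, 1)) (fderiv ℝ (fderiv ℝ f) (s, t) (0, 1) (1, 0)) s := by
  have hd : Differentiable ℝ (fderiv ℝ f) :=
    (hf.fderiv_right (m := 1) (by norm_cast)).differentiable (by norm_num)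
  have hsymm : IsSymmSndFDerivAt ℝ f (s, t) :=
    hf.contDiffAt.isSymmSndFDerivAt (by simp; norm_cast)
  rw [hsymm.eq (0, 1) (1, 0)]
  simpa using (hasDerivAt_partial_fst (hd (s, t))).clm_apply (hasDerivAt_const s ((0 : ℝ), (1 : ℝ)))

end Partial

/-- non-abelian Stokes' theorem for a contractible loop, cf. Corollary 3.7.
With the additional hypothesis `b (0, t) = 0` (constant source path), the holonomy `τ (1,1)`
around the contractible loop equals the path-ordered exponential `g 1` of the
transport-conjugated curvature integrated over the filling disk. -/
theorem nonabelian_stokes_contractible_loop (k : ℕ)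
    (a b τ : ℝ × ℝ → Matrix (Fin k) (Fin k) ℝ)
    (g : ℝ → Matrix (Fin k) (Fin k) ℝ)
    (ha : ContDiff ℝ (⊤ : ℕ∞) a) (hb : ContDiff ℝ (⊤ : ℕ∞) b)
    (ha0 : ∀ s ∈ Set.Icc (0 : ℝ) 1, a (s, 0) = 0)
    (ha1 : ∀ s ∈ Set.Icc (0 : ℝ) 1, a (s, 1) = 0)
    (hb0 : ∀ t ∈ Set.Icc (0 : ℝ) 1, b (0, t) = 0)
    (hτ : ContDiff ℝ (⊤ : ℕ∞) τ)
    (hτ0 : ∀ s ∈ Set.Icc (0 : ℝ) 1, τ (s, 0) = 1)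
    (hτu : ∀ p ∈ Set.Icc (0 : ℝ) 1 ×ˢ Set.Icc (0 : ℝ) 1, IsUnit (τ p))
    (hτt : ∀ p ∈ Set.Icc (0 : ℝ) 1 ×ˢ Set.Icc (0 : ℝ) 1,
      fderiv ℝ τ p ((0 : ℝ), (1 : ℝ)) = - b p * τ p)
    (hg0 : g 0 = 1)
    (hg : ∀ s ∈ Set.Icc (0 : ℝ) 1, HasDerivAt g
      (- g s * ∫ t in (0 : ℝ)..1,
        (τ (s, t))⁻¹ *
          (fderiv ℝ b (s, t) ((1 : ℝ), (0 : ℝ)) - fderiv ℝ a (s, t) ((0 : ℝ), (1 : ℝ))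
            + (a (s, t) * b (s, t) - b (s, t) * a (s, t))) * τ (s, t)) s) :
    g 1 = τ (1, 1) := by
  have h0 : (0 : ℝ) ∈ Set.Icc (0 : ℝ) 1 := Set.left_mem_Icc.2 zero_le_one
  have h1 : (1 : ℝ) ∈ Set.Icc (0 : ℝ) 1 := Set.right_mem_Icc.2 zero_le_one
  have hda : Differentiable ℝ a := ha.differentiable (by simp)
  have hdb : Differentiable ℝ b := hb.differentiable (by simp)
  have hdτ : Differentiable ℝ τ := hτ.differentiable (by simp)
  have hτ01 : τ (0, 1) = 1 := by
    rw [← hτ0 0 h0]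
    refine eq_of_hasDerivAt_zero_Icc (u := fun r => τ (0, r)) fun r hr => ?_
    refine (hasDerivAt_partial_snd (hdτ (0, r))).congr_deriv ((hτt (0, r) ⟨h0, hr⟩).trans ?_)
    rw [hb0 r hr, neg_zero, Matrix.zero_mul]
  have hσ0 : ∀ s ∈ Set.Icc (0 : ℝ) 1, fderiv ℝ τ (s, 0) ((1 : ℝ), (0 : ℝ)) = 0 := fun s hs =>
    deriv_eq_of_eqOn_Icc hs hτ0 (hasDerivAt_partial_fst (hdτ (s, 0))) (hasDerivAt_const s 1)
  have hmixed : ∀ s ∈ Set.Icc (0 : ℝ) 1, ∀ t ∈ Set.Icc (0 : ℝ) 1,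
      fderiv ℝ (fderiv ℝ τ) (s, t) (0, 1) (1, 0) =
        -fderiv ℝ b (s, t) (1, 0) * τ (s, t) + -b (s, t) * fderiv ℝ τ (s, t) (1, 0) :=
    fun s hs t ht => deriv_eq_of_eqOn_Icc hs (fun r hr => hτt (r, t) ⟨hr, ht⟩)
      (hasDerivAt_partial_fst_snd hτ s t)
      (hasDerivAt_matrix_mul (hasDerivAt_partial_fst (hdb (s, t))).neg
        (hasDerivAt_partial_fst (hdτ (s, t))))
  have hint : ∀ s ∈ Set.Icc (0 : ℝ) 1, (∫ t in (0 : ℝ)..1,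
        (τ (s, t))⁻¹ *
          (fderiv ℝ b (s, t) ((1 : ℝ), (0 : ℝ)) - fderiv ℝ a (s, t) ((0 : ℝ), (1 : ℝ))
            + (a (s, t) * b (s, t) - b (s, t) * a (s, t))) * τ (s, t)) =
      -((τ (s, 1))⁻¹ * fderiv ℝ τ (s, 1) (1, 0)) := by
    intro s hs
    have hcont : ContinuousOn (fun t => (τ (s, t))⁻¹ *
          (fderiv ℝ b (s, t) ((1 : ℝ), (0 : ℝ)) - fderiv ℝ a (s, t) ((0 : ℝ), (1 : ℝ))
            + (a (s, t) * b (s, t) - b (s, t) * a (s, t))) * τ (s, t)) (Set.uIcc 0 1) := by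
      rw [Set.uIcc_of_le zero_le_one]
      intro t ht
      have hline : Continuous fun t : ℝ => (s, t) := by fun_prop
      have cτ : Continuous fun t => τ (s, t) := hτ.continuous.comp hline
      have ca : Continuous fun t => a (s, t) := ha.continuous.comp hline
      have cb : Continuous fun t => b (s, t) := hb.continuous.comp hline
      have cfa : Continuous fun t => fderiv ℝ a (s, t) ((0 : ℝ), (1 : ℝ)) :=
        ((ha.continuous_fderiv (by simp)).comp hline).clm_apply continuous_const
      have cfb : Continuous fun t => fderiv ℝ b (s, t) ((1 : ℝ), (0 : ℝ)) :=
        ((hb.continuous_fderiv (by simp)).comp hline).clm_apply continuous_const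
      have cK := (cfb.sub cfa).add ((ca.mul cb).sub (cb.mul ca))
      exact (((continuousAt_nonsing_inv cτ.continuousAt (hτu (s, t) ⟨hs, ht⟩)).mul
        cK.continuousAt).mul cτ.continuousAt).continuousWithinAt
    have hprim : ∀ t ∈ Set.uIcc (0 : ℝ) 1, HasDerivAt
        (fun t => -((τ (s, t))⁻¹ * (fderiv ℝ τ (s, t) (1, 0) + a (s, t) * τ (s, t))))
        ((τ (s, t))⁻¹ *
          (fderiv ℝ b (s, t) ((1 : ℝ), (0 : ℝ)) - fderiv ℝ a (s, t) ((0 : ℝ), (1 : ℝ))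
            + (a (s, t) * b (s, t) - b (s, t) * a (s, t))) * τ (s, t)) t := by
      intro t ht
      rw [Set.uIcc_of_le zero_le_one] at ht
      have hu := hτu (s, t) ⟨hs, ht⟩
      have hud := (Matrix.isUnit_iff_isUnit_det _).1 hu
      have dτ := (hasDerivAt_partial_snd (hdτ (s, t))).congr_deriv (hτt (s, t) ⟨hs, ht⟩)
      have dσ := (hasDerivAt_partial_snd_fst hτ s t).congr_deriv (hmixed s hs t ht)
      have dinv := hasDerivAt_matrix_inv dτ hu
      have d := (hasDerivAt_matrix_mul dinv
        (dσ.add (hasDerivAt_matrix_mul (hasDerivAt_partial_snd (hda (s, t))) dτ))).neg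
      refine d.congr_deriv ?_
      -- After cancelling `τ τ⁻¹` inside the derivative of `τ⁻¹`, this is a ring identity.
      rw [show (τ (s, t))⁻¹ * (-b (s, t) * τ (s, t)) * (τ (s, t))⁻¹ = -((τ (s, t))⁻¹ * b (s, t)) by
        rw [Matrix.mul_assoc, Matrix.mul_assoc, Matrix.mul_nonsing_inv _ hud, Matrix.mul_one,
          Matrix.mul_neg]]
      exact stokes_ring_identity _ _ _ _ _ _ _
    rw [intervalIntegral.integral_eq_sub_of_hasDerivAt hprim hcont.intervalIntegrable,
      hσ0 s hs, ha0 s hs, ha1 s hs]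
    simp
  have hconst : g 1 * (τ (1, 1))⁻¹ = g 0 * (τ (0, 1))⁻¹ := by
    refine eq_of_hasDerivAt_zero_Icc (u := fun s => g s * (τ (s, 1))⁻¹) fun s hs => ?_
    have dg := hg s hs
    rw [hint s hs] at dg
    have d := hasDerivAt_matrix_mul dg
      (hasDerivAt_matrix_inv (hasDerivAt_partial_fst (hdτ (s, 1))) (hτu (s, 1) ⟨hs, h1⟩))
    refine d.congr_deriv (Eq.trans ?_ (rfl : (0 : Matrix (Fin k) (Fin k) ℝ) = _))
    rw [neg_mul_neg, Matrix.mul_neg, Matrix.mul_assoc (g s)]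
    exact add_neg_cancel _
  rw [hg0, hτ01, inv_one, Matrix.one_mul] at hconst
  have hud := (Matrix.isUnit_iff_isUnit_det _).1 (hτu (1, 1) ⟨h1, h1⟩)
  calc g 1 = g 1 * (τ (1, 1))⁻¹ * τ (1, 1) := by
        rw [Matrix.mul_assoc, Matrix.nonsing_inv_mul _ hud, Matrix.mul_one]
    _ = τ (1, 1) := by rw [hconst, Matrix.one_mul]
end

section
/- Let k, m be natural numbers and a, b : ℝ × ℝ → Matrix k k ℝ smooth. Suppose f₁ʰ : ℝ → Matrix k k ℝ, f₁ᵛ : ℝ × ℝ → Matrix k k ℝ, f₂ᵛ : ℝ → Matrix k k ℝ and f₂ʰ : ℝ × ℝ → Matrix k k ℝ are smooth and solve the parallel-transport equations f₁ʰ 0 = 1 and (f₁ʰ)' (t) = − b (0,t) * f₁ʰ (t); f₁ᵛ (0, t) = 1 and ∂_s f₁ᵛ (s,t) = − a (s,t) * f₁ᵛ (s,t); f₂ᵛ 0 = 1 and (f₂ᵛ)' (s) = − a (s,0) * f₂ᵛ (s); f₂ʰ (s, 0) = 1 and ∂_t f₂ʰ (s,t) = − b (s,t) * f₂ʰ (s,t).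 Let T : Matrix m m ℝ → Matrix k k ℝ be twice continuously differentiable with T 1 = 1, and let W : ℝ × ℝ → Matrix m m ℝ be smooth with W (s, 0) = 1 and W (0, t) = 1 for all s, t, satisfying the target-matching condition f₂ʰ (s,t) * f₂ᵛ (s) = T (W (s,t)) * f₁ᵛ (s,t) * f₁ʰ (t) for all (s,t). Then (fderiv ℝ T 1) (− ∂_s ∂_t W (0,0)) = ∂_s b (0,0) − ∂_t a (0,0) + [a (0,0), b (0,0)]. (This is the pointwise form of the paper's Proposition: the 1-form A and 2-form B extracted from a smooth 2-functor satisfy the fake-flatness relation dA + [A ∧ A] = t_* ∘ B.) -/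
/-!
Differentiate the target-matching condition in `t` along `t = 0`, and the resulting identity of
curves in `s` at `s = 0`. On the left this gives `∂_s (-b (s,0) * f2v s) = -∂_s b + b * a`.
On the right the Leibniz rule gives `T_* (∂_s ∂_t W) + ∂_s ∂_t f1v + a * b`: the remaining terms
vanish because `W (0, t) = 1` makes `∂_t W (0,0) = 0`. Symmetry of second derivatives and the
transport equation turn `∂_s ∂_t f1v (0,0)` into `∂_t (-a * f1v) (0,0) = -∂_t a`, using
`f1v (0, t) = 1`. Comparing both sides is the claim.
-/

attribute [local instance] Matrix.normedAddCommGroup Matrix.normedSpace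

/-- Leibniz rule for products of matrix-valued curves. The entrywise sup norm on matrices is not
submultiplicative, so the rule for normed algebras does not apply; it is proved entrywise. -/
theorem hasDerivAt_matrix_mul_s6 {k : ℕ} {f g : ℝ → Matrix (Fin k) (Fin k) ℝ}
    {f' g' : Matrix (Fin k) (Fin k) ℝ} {x : ℝ}
    (hf : HasDerivAt f f' x) (hg : HasDerivAt g g' x) :
    HasDerivAt (fun y => f y * g y) (f' * g x + f x * g') x := by
  have hf2 : ∀ i j, HasDerivAt (fun y => f y i j) (f' i j) x := fun i j =>
    hasDerivAt_pi.1 (hasDerivAt_pi.1 hf i) j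
  have hg2 : ∀ i j, HasDerivAt (fun y => g y i j) (g' i j) x := fun i j =>
    hasDerivAt_pi.1 (hasDerivAt_pi.1 hg i) j
  refine hasDerivAt_pi.2 fun i => hasDerivAt_pi.2 fun j => ?_
  have h := HasDerivAt.fun_sum (u := Finset.univ)
    (fun l _ => (hf2 i l).mul (hg2 l j))
  simpa [Matrix.mul_apply, Finset.sum_add_distrib] using h

theorem hasDerivAt_fst_slice {n : ℕ}
    {F : ℝ × ℝ → Matrix (Fin n) (Fin n) ℝ} (hF : Differentiable ℝ F) (s t : ℝ) :
    HasDerivAt (fun x => F (x, t)) (fderiv ℝ F (s, t) (1, 0)) s :=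
  (hF (s, t)).hasFDerivAt.comp_hasDerivAt s ((hasDerivAt_id s).prodMk (hasDerivAt_const s t))

theorem hasDerivAt_snd_slice {n : ℕ}
    {F : ℝ × ℝ → Matrix (Fin n) (Fin n) ℝ} (hF : Differentiable ℝ F) (s t : ℝ) :
    HasDerivAt (fun y => F (s, y)) (fderiv ℝ F (s, t) (0, 1)) t :=
  (hF (s, t)).hasFDerivAt.comp_hasDerivAt t ((hasDerivAt_const t s).prodMk (hasDerivAt_id t))

theorem differentiable_fderiv_apply {n : ℕ}
    {F : ℝ × ℝ → Matrix (Fin n) (Fin n) ℝ} (hF : ContDiff ℝ (⊤ : ℕ∞) F) (v : ℝ × ℝ) :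
    Differentiable ℝ (fun p => fderiv ℝ F p v) :=
  ((hF.fderiv_right (m := 1) (by norm_cast)).differentiable (by norm_num)).clm_apply
    (differentiable_const v)

/-- Symmetry of mixed partial derivatives, for iterated directional derivatives. -/
theorem fderiv_fderiv_apply_comm {E : Type*} [NormedAddCommGroup E] [NormedSpace ℝ E]
    {F : ℝ × ℝ → E} (hF : ContDiff ℝ (⊤ : ℕ∞) F) (p v w : ℝ × ℝ) :
    fderiv ℝ (fun q => fderiv ℝ F q v) p w = fderiv ℝ (fun q => fderiv ℝ F q w) p v := by
  have hd : DifferentiableAt ℝ (fderiv ℝ F) p :=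
    (hF.fderiv_right (m := 1) (by norm_cast)).differentiable (by norm_num) p
  have hs : IsSymmSndFDerivAt ℝ F p :=
    hF.contDiffAt.isSymmSndFDerivAt (by simp; norm_cast)
  rw [fderiv_clm_apply hd (by fun_prop), fderiv_clm_apply hd (by fun_prop)]
  simpa using hs w v

/-- `fderiv_fderiv_apply_comm` at matrices, with the linear structure and topology expressed
through the `Matrix` instances, which agree with those of the norm only up to unfolding. -/
theorem fderiv_fderiv_apply_comm_matrix {n : ℕ} {F : ℝ × ℝ → Matrix (Fin n) (Fin n) ℝ}
    (hF : ContDiff ℝ (⊤ : ℕ∞) F) (p v w : ℝ × ℝ) :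
    fderiv ℝ (fun q => fderiv ℝ F q v) p w = fderiv ℝ (fun q => fderiv ℝ F q w) p v :=
  fderiv_fderiv_apply_comm hF p v w

/-- pointwise form of Proposition 2.8 of the paper. If the transports
along the two boundary halves of rectangles are related by the target-matching condition
`f2h (s,t) * f2v (s) = T (W (s,t)) * f1v (s,t) * f1h (t)`, then
`T_* (− ∂_s ∂_t W (0,0)) = ∂_s b − ∂_t a + [a, b]` at `(0,0)`:
the extracted forms satisfy the fake-flatness relation `dA + [A ∧ A] = t_* ∘ B`. -/
theorem two_functor_fake_flatness (k m : ℕ)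
    (a b : ℝ × ℝ → Matrix (Fin k) (Fin k) ℝ)
    (ha : ContDiff ℝ (⊤ : ℕ∞) a) (hb : ContDiff ℝ (⊤ : ℕ∞) b)
    (f1h : ℝ → Matrix (Fin k) (Fin k) ℝ)
    (f1v : ℝ × ℝ → Matrix (Fin k) (Fin k) ℝ)
    (f2v : ℝ → Matrix (Fin k) (Fin k) ℝ)
    (f2h : ℝ × ℝ → Matrix (Fin k) (Fin k) ℝ)
    (hf1hs : ContDiff ℝ (⊤ : ℕ∞) f1h) (hf1vs : ContDiff ℝ (⊤ : ℕ∞) f1v)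
    (hf2vs : ContDiff ℝ (⊤ : ℕ∞) f2v) (hf2hs : ContDiff ℝ (⊤ : ℕ∞) f2h)
    (hf1h0 : f1h 0 = 1)
    (hf1h : ∀ t : ℝ, HasDerivAt f1h (- b (0, t) * f1h t) t)
    (hf1v0 : ∀ t : ℝ, f1v (0, t) = 1)
    (hf1v : ∀ p : ℝ × ℝ, fderiv ℝ f1v p ((1 : ℝ), (0 : ℝ)) = - a p * f1v p)
    (hf2v0 : f2v 0 = 1)
    (hf2v : ∀ s : ℝ, HasDerivAt f2v (- a (s, 0) * f2v s) s)
    (hf2h0 : ∀ s : ℝ, f2h (s, 0) = 1)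
    (hf2h : ∀ p : ℝ × ℝ, fderiv ℝ f2h p ((0 : ℝ), (1 : ℝ)) = - b p * f2h p)
    (T : Matrix (Fin m) (Fin m) ℝ → Matrix (Fin k) (Fin k) ℝ)
    (hT : ContDiff ℝ 2 T) (hT1 : T 1 = 1)
    (W : ℝ × ℝ → Matrix (Fin m) (Fin m) ℝ)
    (hWs : ContDiff ℝ (⊤ : ℕ∞) W)
    (hW0s : ∀ s : ℝ, W (s, 0) = 1)
    (hW0t : ∀ t : ℝ, W (0, t) = 1)
    (htarget : ∀ p : ℝ × ℝ, f2h p * f2v p.1 = T (W p) * f1v p * f1h p.2) :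
    (fderiv ℝ T 1)
        (- deriv (fun s : ℝ => fderiv ℝ W (s, 0) ((0 : ℝ), (1 : ℝ))) 0)
      = fderiv ℝ b ((0 : ℝ), (0 : ℝ)) ((1 : ℝ), (0 : ℝ))
          - fderiv ℝ a ((0 : ℝ), (0 : ℝ)) ((0 : ℝ), (1 : ℝ))
          + (a (0, 0) * b (0, 0) - b (0, 0) * a (0, 0)) := by
  have hd : ∀ {n : ℕ} {F : ℝ × ℝ → Matrix (Fin n) (Fin n) ℝ}, ContDiff ℝ (⊤ : ℕ∞) F →
      Differentiable ℝ F := fun h => h.differentiable (by simp)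
  have hTd : Differentiable ℝ T := hT.differentiable (by norm_num)
  -- The `t`-derivative of the target-matching condition along `t = 0`.
  have key : ∀ s : ℝ, - b (s, 0) * f2v s
      = (fderiv ℝ T 1 (fderiv ℝ W (s, 0) (0, 1)) * f1v (s, 0) + fderiv ℝ f1v (s, 0) (0, 1))
        - f1v (s, 0) * b (0, 0) := by
    intro s
    have hL := hasDerivAt_matrix_mul_s6 (hasDerivAt_snd_slice (hd hf2hs) s 0)
      (hasDerivAt_const (0 : ℝ) (f2v s))
    have hTW : HasDerivAt (fun t => T (W (s, t))) (fderiv ℝ T 1 (fderiv ℝ W (s, 0) (0, 1))) 0 := by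
      have h := (hTd (W (s, 0))).hasFDerivAt.comp_hasDerivAt (0 : ℝ)
        (hasDerivAt_snd_slice (hd hWs) s 0)
      rwa [hW0s] at h
    have hR := hasDerivAt_matrix_mul_s6
      (hasDerivAt_matrix_mul_s6 hTW (hasDerivAt_snd_slice (hd hf1vs) s 0)) (hf1h 0)
    have h := hL.unique (hR.congr_of_eventuallyEq
      (Filter.Eventually.of_forall fun t => htarget (s, t)))
    simpa [hf2h, hf2h0, hf1h0, hW0s, hT1, sub_eq_add_neg] using h
  have hWt : fderiv ℝ W (0, 0) (0, 1) = 0 := by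
    have h := hasDerivAt_snd_slice (hd hWs) 0 0
    simp only [hW0t] at h
    exact h.unique (hasDerivAt_const _ _)
  have hWd : HasDerivAt (fun s : ℝ => fderiv ℝ W (s, 0) ((0 : ℝ), (1 : ℝ)))
      (deriv (fun s : ℝ => fderiv ℝ W (s, 0) ((0 : ℝ), (1 : ℝ))) 0) 0 :=
    (hasDerivAt_fst_slice (differentiable_fderiv_apply hWs (0, 1)) 0 0).differentiableAt.hasDerivAt
  have hTWd := (fderiv ℝ T 1).hasFDerivAt.comp_hasDerivAt (0 : ℝ) hWd
  -- `∂_s ∂_t f1v (0,0) = ∂_t ∂_s f1v (0,0) = -∂_t a (0,0)`.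
  have hmix : fderiv ℝ (fun q => fderiv ℝ f1v q (0, 1)) (0, 0) (1, 0)
      = - fderiv ℝ a (0, 0) (0, 1) := by
    rw [fderiv_fderiv_apply_comm_matrix hf1vs]
    have h := hasDerivAt_snd_slice (differentiable_fderiv_apply hf1vs (1, 0)) 0 0
    simp only [hf1v, hf1v0, mul_one] at h
    simp only [hf1v]
    exact h.unique (hasDerivAt_snd_slice (hd ha) 0 0).neg
  have hL := hasDerivAt_matrix_mul_s6 (hasDerivAt_fst_slice (hd hb) 0 0).neg (hf2v 0)
  have hv := hasDerivAt_fst_slice (hd hf1vs) 0 0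
  have hR := ((hasDerivAt_matrix_mul_s6 hTWd hv).add
    (hasDerivAt_fst_slice (differentiable_fderiv_apply hf1vs (0, 1)) 0 0)).sub
      (hasDerivAt_matrix_mul_s6 hv (hasDerivAt_const (0 : ℝ) (b (0, 0))))
  have h := hL.unique (hR.congr_of_eventuallyEq (Filter.Eventually.of_forall key))
  simp only [Function.comp_apply, hmix, hWt, map_zero, zero_mul, add_zero, hf1v, hf1v0, hf2v0,
    mul_one, mul_zero, Pi.neg_apply] at h
  have alg : ∀ X A B p q : Matrix (Fin k) (Fin k) ℝ,
      -B + -q * -p = X + -A - -p * q → -X = B - A + (p * q - q * p) := by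
    intro X A B p q e
    rw [← sub_eq_zero] at e ⊢
    rw [← e]
    noncomm_ring
  rw [map_neg]
  exact alg _ _ _ _ _ h
end

section
/- Let k be a natural number and E a real normed vector space. For a continuously differentiable map g : E → Matrix k k ℝ with invertible values and a map A : E → (E →L[ℝ] Matrix k k ℝ), define the gauge transform (g • A) (x) (v) = g (x) * A (x) (v) * (g x)⁻¹ − (fderiv ℝ g x v) * (g x)⁻¹. Then for any two continuously differentiable invertible-valued maps g₁, g₂ : E → Matrix k k ℝ and any A : E → (E →L[ℝ] Matrix k k ℝ), one has g₂ • (g₁ • A) = (g₂ * g₁) • A, where (g₂ * g₁) (x) = g₂ (x) * g₁ (x). (This is the composition law of morphisms in the category Z¹ of 1-forms: gauge transformations compose by pointwise multiplication.) -/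
/-!
By the Leibniz rule, `d(g₂ g₁) (g₂ g₁)⁻¹ = g₂ (dg₁ g₁⁻¹) g₂⁻¹ + dg₂ g₂⁻¹`, i.e. the right-invariant
Maurer–Cartan form pulls back along a product with an `Ad`-twist; together with the multiplicativity
of `Ad` this is the composition law. The analytic input is `fderiv_matrix_mul_apply`.
-/

attribute [local instance] Matrix.normedAddCommGroup Matrix.normedSpace

/-- The gauge transform `Ad_g(B) − g*θ̄` of a matrix-valued 1-form `B` (given pointwise
as a function of the point and the tangent vector) by an invertible-valued function `g`. -/
noncomputable def gaugeTransform {E : Type*} [NormedAddCommGroup E] [NormedSpace ℝ E] {k : ℕ}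
    (g : E → Matrix (Fin k) (Fin k) ℝ) (B : E → E → Matrix (Fin k) (Fin k) ℝ) :
    E → E → Matrix (Fin k) (Fin k) ℝ :=
  fun x v => g x * B x v * (g x)⁻¹ - (fderiv ℝ g x v) * (g x)⁻¹

/-- Leibniz rule for the pointwise product of matrix-valued functions. The entrywise sup norm is not
submultiplicative, so `fderiv_mul` does not apply; matrix multiplication is instead treated as a
bilinear map on a finite-dimensional space, which is automatically continuous. -/
theorem fderiv_matrix_mul_apply {E : Type*} [NormedAddCommGroup E] [NormedSpace ℝ E] {k : ℕ}
    {f g : E → Matrix (Fin k) (Fin k) ℝ} {x : E}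
    (hf : DifferentiableAt ℝ f x) (hg : DifferentiableAt ℝ g x) (v : E) :
    fderiv ℝ (fun y => f y * g y) x v = f x * fderiv ℝ g x v + fderiv ℝ f x v * g x := by
  let B : Matrix (Fin k) (Fin k) ℝ →L[ℝ] Matrix (Fin k) (Fin k) ℝ →L[ℝ]
      Matrix (Fin k) (Fin k) ℝ :=
    (LinearMap.mul ℝ (Matrix (Fin k) (Fin k) ℝ)).toContinuousBilinearMap
  have h := (B.hasFDerivAt_of_bilinear hf.hasFDerivAt hg.hasFDerivAt).fderiv
  exact congrArg (fun L => L v) h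

/-- composition law of morphisms in the category `Z¹` of 1-forms.
Gauge transformations of matrix-valued 1-forms compose by pointwise multiplication:
`g₂ • (g₁ • A) = (g₂ * g₁) • A`. -/
theorem gaugeTransform_comp {E : Type*} [NormedAddCommGroup E] [NormedSpace ℝ E] (k : ℕ)
    (g₁ g₂ : E → Matrix (Fin k) (Fin k) ℝ)
    (hg₁ : ContDiff ℝ 1 g₁) (hg₂ : ContDiff ℝ 1 g₂)
    (hg₁u : ∀ x : E, IsUnit (g₁ x)) (hg₂u : ∀ x : E, IsUnit (g₂ x))
    (A : E → (E →L[ℝ] Matrix (Fin k) (Fin k) ℝ)) :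
    gaugeTransform g₂ (gaugeTransform g₁ (fun x v => A x v))
      = gaugeTransform (fun x => g₂ x * g₁ x) (fun x v => A x v) := by
  funext x v
  have hd₁ : DifferentiableAt ℝ g₁ x := hg₁.differentiable one_ne_zero x
  have hd₂ : DifferentiableAt ℝ g₂ x := hg₂.differentiable one_ne_zero x
  have hu : g₁ x * (g₁ x)⁻¹ = 1 :=
    Matrix.mul_nonsing_inv _ ((Matrix.isUnit_iff_isUnit_det _).1 (hg₁u x))
  -- The Leibniz term `dg₂ * g₁` loses its `g₁` against the inverse of `g₂ * g₁`.
  have hc : fderiv ℝ g₂ x v * g₁ x * ((g₁ x)⁻¹ * (g₂ x)⁻¹) = fderiv ℝ g₂ x v * (g₂ x)⁻¹ := by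
    rw [mul_assoc, ← mul_assoc (g₁ x), hu, one_mul]
  simp only [gaugeTransform]
  rw [fderiv_matrix_mul_apply hd₂ hd₁, Matrix.mul_inv_rev, add_mul, hc]
  noncomm_ring
end
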